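/- arXiv:1405.5767 — 2 statements merged into one kernel-verified Lean document; each statement's English description precedes it below -/
import Mathlib

section
/- There exists a constant C > 0, independent of k, such that for every f in the Fock space F²(ℂ), every k ∈ ℕ, and every z ∈ ℂ, the k-th derivative satisfies |f^{(k)}(z)| ≤ C · k! · (1+|z|)^k · e^{|z|²/2} · ‖f‖_{F²}. -/
open MeasureTheory Complex Real Filter
open scoped Nat

/-- The Gaussian-weighted square integrand for the Fock space. -/
noncomputable def fockIntegrand (f : ℂ → ℂ) (z : ℂ) : ℝ := ‖f z‖ ^ 2 * Real.exp (-‖z‖ ^ 2)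

/-- The squared Fock norm: π⁻¹ ∫ |f|² e^{-|z|²} dV. -/
noncomputable def fockNormSq (f : ℂ → ℂ) : ℝ := π⁻¹ * ∫ z : ℂ, fockIntegrand f z

/-- Membership in the Fock space F²(ℂ): entire and Gaussian square-integrable. -/
def MemFock (f : ℂ → ℂ) : Prop := Differentiable ℂ f ∧ Integrable (fockIntegrand f)

lemma fock_mean_circle (g : ℂ → ℂ) (hg : Differentiable ℂ g) (r : ℝ) :
    ∫⁻ _θ in Set.Ioo (-π) π, ‖g 0‖ₑ ≤ ∫⁻ θ in Set.Ioo (-π) π, ‖g (circleMap 0 r θ)‖ₑ := by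
  have h1 : Real.circleAverage g 0 r = g 0 :=
    DiffContOnCl.circleAverage hg.diffContOnCl
  have hper : Function.Periodic (fun θ => g (circleMap 0 r θ)) (2 * π) := fun θ => by
    simp only [periodic_circleMap 0 r θ]
  have h2 := hper.intervalIntegral_add_eq 0 (-π)
  rw [zero_add, show -π + 2 * π = π by ring] at h2
  rw [Real.circleAverage_def, h2, intervalIntegral.integral_of_le (by linarith [Real.pi_pos]),
    integral_Ioc_eq_integral_Ioo] at h1
  have h3 : ∫ θ in Set.Ioo (-π) π, g (circleMap 0 r θ) = (2 * π : ℝ) • g 0 := by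
    rw [← h1, smul_smul, mul_inv_cancel₀ (by positivity), one_smul]
  have h4 := enorm_integral_le_lintegral_enorm (μ := volume.restrict (Set.Ioo (-π) π))
    (fun θ => g (circleMap 0 r θ))
  refine le_trans (le_of_eq ?_) h4
  rw [h3, enorm_smul, setLIntegral_const, Real.volume_Ioo, mul_comm,
    Real.enorm_eq_ofReal (by positivity)]
  congr 2
  ring

lemma fock_polar (g : ℂ → ℂ) (hg : Continuous g) :
    ∫⁻ ζ : ℂ, ‖g ζ‖ₑ * ENNReal.ofReal (Real.exp (-‖ζ‖ ^ 2)) =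
      ∫⁻ r in Set.Ioi (0 : ℝ), ENNReal.ofReal r * ENNReal.ofReal (Real.exp (-r ^ 2)) *
        ∫⁻ θ in Set.Ioo (-π) π, ‖g (circleMap 0 r θ)‖ₑ := by
  rw [← Complex.lintegral_comp_polarCoord_symm, polarCoord_target, Measure.volume_eq_prod,
    ← Measure.prod_restrict]
  have key : ∀ p : ℝ × ℝ, ENNReal.ofReal p.1 • (‖g (Complex.polarCoord.symm p)‖ₑ *
      ENNReal.ofReal (Real.exp (-‖Complex.polarCoord.symm p‖ ^ 2))) =
      ENNReal.ofReal p.1 * ENNReal.ofReal (Real.exp (-p.1 ^ 2)) * ‖g (circleMap 0 p.1 p.2)‖ₑ := by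
    intro p
    have : Complex.polarCoord.symm p = circleMap 0 p.1 p.2 := by
      rw [Complex.polarCoord_symm_apply, circleMap, Complex.exp_mul_I, zero_add]
      simp
    rw [this, norm_circleMap_zero, sq_abs, smul_eq_mul]
    ring
  simp_rw [key]
  rw [lintegral_prod]
  · refine lintegral_congr fun r => ?_
    dsimp only
    rw [lintegral_const_mul]
    exact (hg.comp (continuous_circleMap 0 r)).enorm.measurable
  · apply Measurable.aemeasurable
    have : Continuous fun p : ℝ × ℝ => circleMap 0 p.1 p.2 := by
      unfold circleMap; fun_prop
    have := (hg.comp this).enorm.measurable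
    fun_prop

lemma fock_gauss_integral : ∫ ζ : ℂ, Real.exp (-‖ζ‖ ^ 2) = π := by
  have := Complex.integral_exp_neg_rpow (p := 2) (by norm_num)
  simpa [one_add_one_eq_two, Real.Gamma_two] using this

lemma fock_gauss_lintegral : ∫⁻ ζ : ℂ, ENNReal.ofReal (Real.exp (-‖ζ‖ ^ 2)) = ENNReal.ofReal π := by
  rw [← fock_gauss_integral, ofReal_integral_eq_lintegral_ofReal]
  · by_contra h
    have := fock_gauss_integral
    rw [integral_undef h] at this
    exact Real.pi_pos.ne this
  · exact Eventually.of_forall fun _ => (Real.exp_pos _).le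

lemma fock_mean (g : ℂ → ℂ) (hg : Differentiable ℂ g) :
    ‖g 0‖ₑ * ENNReal.ofReal π ≤ ∫⁻ ζ : ℂ, ‖g ζ‖ₑ * ENNReal.ofReal (Real.exp (-‖ζ‖ ^ 2)) := by
  rw [← fock_gauss_lintegral, ← lintegral_const_mul _ (by fun_prop),
    fock_polar g hg.continuous, fock_polar (fun _ => g 0) continuous_const]
  exact lintegral_mono fun r => mul_le_mul_right (fock_mean_circle g hg r) _

lemma fock_pointwise (f : ℂ → ℂ) (hf : MemFock f) (w : ℂ) :
    ‖f w‖ ≤ Real.exp (‖w‖ ^ 2 / 2) * Real.sqrt (fockNormSq f) := by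
  obtain ⟨hd, hi⟩ := hf
  have hnn : ∀ z, 0 ≤ fockIntegrand f z := fun z => by unfold fockIntegrand; positivity
  set g : ℂ → ℂ := fun ζ => (f (w + ζ) * Complex.exp (-(starRingEnd ℂ w * ζ))) ^ 2 with hgdef
  have hg : Differentiable ℂ g := by
    have : Differentiable ℂ fun ζ => f (w + ζ) := hd.comp (by fun_prop)
    fun_prop
  have h1 := fock_mean g hg
  have key : ∀ ζ, ‖g ζ‖ₑ * ENNReal.ofReal (Real.exp (-‖ζ‖ ^ 2)) =
      ENNReal.ofReal (Real.exp (‖w‖ ^ 2) * fockIntegrand f (w + ζ)) := by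
    intro ζ
    rw [← ofReal_norm, ← ENNReal.ofReal_mul (norm_nonneg _)]
    congr 1
    simp only [hgdef, fockIntegrand, norm_pow, norm_mul, Complex.norm_exp, mul_pow]
    rw [← Real.exp_nat_mul, mul_assoc, ← Real.exp_add, mul_left_comm, ← Real.exp_add]
    congr 2
    simp only [← Complex.normSq_eq_norm_sq, Complex.normSq_apply]
    simp
    ring
  simp_rw [key] at h1
  rw [← ofReal_integral_eq_lintegral_ofReal ((hi.comp_add_left w).const_mul _)
    (Eventually.of_forall fun ζ => mul_nonneg (Real.exp_pos _).le (hnn _)),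
    integral_const_mul, integral_add_left_eq_self (fockIntegrand f) w,
    ← ofReal_norm, ← ENNReal.ofReal_mul (norm_nonneg _),
    ENNReal.ofReal_le_ofReal_iff (mul_nonneg (Real.exp_pos _).le (integral_nonneg hnn))] at h1
  have h2 : ‖f w‖ ^ 2 ≤ Real.exp (‖w‖ ^ 2) * fockNormSq f := by
    have : ‖g 0‖ = ‖f w‖ ^ 2 := by simp [hgdef]
    rw [this, ← le_div_iff₀ Real.pi_pos] at h1
    refine h1.trans (le_of_eq ?_)
    unfold fockNormSq
    ring
  have h3 := Real.le_sqrt_of_sq_le h2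
  rwa [Real.sqrt_mul (Real.exp_pos _).le, ← Real.exp_half] at h3

/-- Pointwise estimate for derivatives of Fock functions, with explicit
dependence of the constant on the order k of differentiation:
|f^{(k)}(z)| ≤ C k! (1+|z|)^k e^{|z|²/2} ‖f‖_{F²}, C independent of k. -/
theorem fock_derivative_estimate :
    ∃ C : ℝ, 0 < C ∧ ∀ f : ℂ → ℂ, MemFock f → ∀ (k : ℕ) (z : ℂ),
      ‖iteratedDeriv k f z‖ ≤
        C * (k ! : ℝ) * (1 + ‖z‖) ^ k * Real.exp (‖z‖ ^ 2 / 2) *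
          Real.sqrt (fockNormSq f) := by
  refine ⟨Real.exp (3 / 2), Real.exp_pos _, fun f hf k z => ?_⟩
  have hz := norm_nonneg z
  have hR : 0 < (1 + ‖z‖)⁻¹ := by positivity
  have h := Complex.norm_iteratedDeriv_le_of_forall_mem_sphere_norm_le (c := z)
    (C := Real.exp (3 / 2) * Real.exp (‖z‖ ^ 2 / 2) * Real.sqrt (fockNormSq f)) k hR
    hf.1.diffContOnCl (fun w hw => ?_)
  · refine h.trans (le_of_eq ?_)
    rw [inv_pow, div_inv_eq_mul]
    ring
  · refine (fock_pointwise f hf w).trans ?_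
    gcongr
    rw [← Real.exp_add]
    apply Real.exp_le_exp.2
    have h1 : ‖w‖ ≤ ‖z‖ + (1 + ‖z‖)⁻¹ := by
      have := norm_add_le z (w - z)
      rw [mem_sphere_iff_norm.1 hw] at this
      simpa using this
    have h2 : (1 + ‖z‖)⁻¹ * (1 + ‖z‖) = 1 := inv_mul_cancel₀ (by positivity)
    have h3 : ‖w‖ ^ 2 ≤ (‖z‖ + (1 + ‖z‖)⁻¹) ^ 2 := by gcongr
    have h4 : (1 + ‖z‖)⁻¹ ≤ 1 := inv_le_one_of_one_le₀ (by linarith)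
    nlinarith
end

section
/- Let μ be a positive Borel measure on ℂ and k ∈ ℕ. If sup_{z∈ℂ} μ(B(z,r)) · (1+|z|²)^k < ∞ for some r > 0, then there exists a constant ϖ such that for all f ∈ F²(ℂ): ∫_ℂ |f^{(k)}(z)|² e^{-|z|²} dμ(z) ≤ ϖ · ‖f‖²_{F²}. -/
open MeasureTheory Complex Real Filter

lemma circ_bound (h : ℂ → ℂ) (hh : Differentiable ℂ h) (c : ℂ) (t : ℝ) :
    ENNReal.ofReal (2 * π) * ‖h c‖ₑ ≤
      ∫⁻ θ in Set.Ioo (-π) π, ‖h (circleMap c t θ)‖ₑ := by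
  have h1 : Real.circleAverage h c t = h c :=
    DiffContOnCl.circleAverage hh.diffContOnCl
  have h2 : ∫ θ in (0:ℝ)..2 * π, h (circleMap c t θ) = ∫ θ in (-π)..π, h (circleMap c t θ) := by
    have hp : Function.Periodic (fun θ => h (circleMap c t θ)) (2 * π) := by
      intro θ
      simp only [periodic_circleMap c t θ]
    have := hp.intervalIntegral_add_eq 0 (-π)
    rw [zero_add] at this
    rw [this]
    congr 1
    ring
  have h3 : ((2 * π : ℝ) : ℂ) * h c = ∫ θ in (-π)..π, h (circleMap c t θ) := by
    rw [← h2, ← h1, Real.circleAverage_def, Complex.real_smul, ← mul_assoc]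
    rw [← Complex.ofReal_mul, mul_inv_cancel₀ (by positivity)]
    simp
  have h4 : ENNReal.ofReal (2 * π) * ‖h c‖ₑ = ‖((2 * π : ℝ) : ℂ) * h c‖ₑ := by
    rw [enorm_mul, ← ofReal_norm ((2 * π : ℝ) : ℂ), Complex.norm_real,
      Real.norm_of_nonneg (by positivity)]
  rw [h4, h3, intervalIntegral.integral_of_le (by linarith [Real.pi_pos]),
    integral_Ioc_eq_integral_Ioo]
  exact enorm_integral_le_lintegral_enorm _

lemma submean (h : ℂ → ℂ) (hh : Differentiable ℂ h) (c : ℂ) (R : ℝ) (hR : 0 < R) :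
    ENNReal.ofReal (R / 2 * (2 * π) * (R / 2)) * ‖h c‖ₑ ≤ ∫⁻ u in Metric.ball c R, ‖h u‖ₑ := by
  have hc : Continuous h := hh.continuous
  have e1 : ∫⁻ u in Metric.ball c R, ‖h u‖ₑ
      = ∫⁻ u, (Metric.ball (0:ℂ) R).indicator (fun u => ‖h (c + u)‖ₑ) u := by
    rw [← lintegral_indicator Metric.isOpen_ball.measurableSet,
      ← lintegral_add_left_eq_self _ c]
    congr 1
    ext u
    simp [Set.indicator, Metric.mem_ball, dist_eq_norm]
  rw [e1, ← Complex.lintegral_comp_polarCoord_symm]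
  have hsub : (Set.Ioo (R/2) R ×ˢ Set.Ioo (-π) π : Set (ℝ × ℝ)) ⊆ polarCoord.target := by
    rintro ⟨a, b⟩ ⟨ha, hb⟩
    exact ⟨lt_trans (by positivity) ha.1, hb⟩
  refine le_trans ?_ (lintegral_mono_set hsub)
  have e2 : ∫⁻ p in (Set.Ioo (R/2) R ×ˢ Set.Ioo (-π) π : Set (ℝ × ℝ)),
      ENNReal.ofReal (R/2) * ‖h (circleMap c p.1 p.2)‖ₑ ≤
      ∫⁻ p in (Set.Ioo (R/2) R ×ˢ Set.Ioo (-π) π : Set (ℝ × ℝ)), ENNReal.ofReal p.1 •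
        (Metric.ball (0:ℂ) R).indicator (fun u => ‖h (c + u)‖ₑ) (Complex.polarCoord.symm p) := by
    refine setLIntegral_mono' (measurableSet_Ioo.prod measurableSet_Ioo) ?_
    rintro ⟨a, b⟩ ⟨ha, hb⟩
    simp only [Set.mem_Ioo] at ha hb
    have ha0 : 0 < a := lt_trans (by positivity) ha.1
    have hs : Complex.polarCoord.symm (a, b) = a * Complex.exp (b * Complex.I) := by
      rw [Complex.polarCoord_symm_apply, Complex.exp_mul_I]
      simp
    have hm : Complex.polarCoord.symm (a, b) ∈ Metric.ball (0:ℂ) R := by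
      rw [hs, mem_ball_zero_iff, norm_mul, Complex.norm_exp_ofReal_mul_I, Complex.norm_real,
        Real.norm_of_nonneg ha0.le]
      linarith
    rw [Set.indicator_of_mem hm, hs, smul_eq_mul]
    refine mul_le_mul (ENNReal.ofReal_le_ofReal ha.1.le) (le_of_eq ?_) (by simp) (by simp)
    simp [circleMap]
  refine le_trans ?_ e2
  rw [Measure.volume_eq_prod, ← Measure.prod_restrict, lintegral_prod]
  · calc ENNReal.ofReal (R / 2 * (2 * π) * (R / 2)) * ‖h c‖ₑ
        = ∫⁻ x in Set.Ioo (R/2) R, ENNReal.ofReal (R/2) * (ENNReal.ofReal (2 * π) * ‖h c‖ₑ) := by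
          rw [setLIntegral_const, Real.volume_Ioo, ENNReal.ofReal_mul (by positivity),
            ENNReal.ofReal_mul (by positivity)]
          have : R - R/2 = R/2 := by ring
          rw [this]
          ring
      _ ≤ _ := by
          refine lintegral_mono fun x => ?_
          simp only
          rw [lintegral_const_mul' _ _ ENNReal.ofReal_ne_top]
          gcongr
          exact circ_bound h hh c x
  · apply Measurable.aemeasurable
    apply Measurable.const_mul
    have : Continuous fun p : ℝ × ℝ => h (circleMap c p.1 p.2) := by
      unfold circleMap
      fun_prop
    exact this.measurable.enorm

lemma fock_submean (R : ℝ) (hR : 0 < R) : ∃ C : ℝ, 0 < C ∧ ∀ f : ℂ → ℂ, MemFock f →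
    ∀ w : ℂ, fockIntegrand f w ≤ C * ∫ u in Metric.ball w R, fockIntegrand f u := by
  refine ⟨Real.exp (R ^ 2) * (R / 2 * (2 * π) * (R / 2))⁻¹, by positivity, ?_⟩
  intro f hf w
  have hnn : ∀ u, 0 ≤ fockIntegrand f u := fun u => by unfold fockIntegrand; positivity
  set K := R / 2 * (2 * π) * (R / 2) with hK
  have hKpos : 0 < K := by positivity
  let h : ℂ → ℂ := fun u => (f u * Complex.exp (-(starRingEnd ℂ w) * (u - w))) ^ 2
  have hd : Differentiable ℂ h := by
    have := hf.1
    fun_prop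
  have key := submean h hd w R hR
  have hnorm : ∀ u, ‖h u‖ * Real.exp (-‖w‖ ^ 2) = fockIntegrand f u * Real.exp (‖u - w‖ ^ 2) := by
    intro u
    simp only [h, fockIntegrand, norm_pow, norm_mul, Complex.norm_exp, mul_pow]
    rw [← Real.exp_nat_mul, mul_assoc, mul_assoc, ← Real.exp_add, ← Real.exp_add]
    congr 2
    simp only [← Complex.normSq_eq_norm_sq, Complex.normSq_apply]
    simp
    ring
  have hw : ‖h w‖ = ‖f w‖ ^ 2 := by simp [h]
  -- convert
  have hint : Integrable (fockIntegrand f) (volume.restrict (Metric.ball w R)) :=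
    hf.2.integrableOn
  have h2 : ∫⁻ u in Metric.ball w R, ‖h u‖ₑ ≤
      ∫⁻ u in Metric.ball w R, ENNReal.ofReal (Real.exp (‖w‖ ^ 2) * Real.exp (R ^ 2)) *
        ENNReal.ofReal (fockIntegrand f u) := by
    refine setLIntegral_mono' Metric.isOpen_ball.measurableSet fun u hu => ?_
    rw [← ofReal_norm, ← ENNReal.ofReal_mul (by positivity)]
    refine ENNReal.ofReal_le_ofReal ?_
    have hu' : ‖u - w‖ < R := by simpa [dist_eq_norm] using hu
    have e : ‖h u‖ = Real.exp (‖w‖ ^ 2) * (fockIntegrand f u * Real.exp (‖u - w‖ ^ 2)) := by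
      rw [← hnorm u, mul_left_comm, ← Real.exp_add]
      simp
    rw [e, mul_assoc, mul_comm (Real.exp (R ^ 2))]
    have := hnn u
    gcongr
  rw [lintegral_const_mul' _ _ ENNReal.ofReal_ne_top,
    ← ofReal_integral_eq_lintegral_ofReal hint (Eventually.of_forall hnn),
    ← ENNReal.ofReal_mul (by positivity)] at h2
  have h3 := key.trans h2
  have hI : 0 ≤ ∫ u in Metric.ball w R, fockIntegrand f u := integral_nonneg hnn
  rw [← ofReal_norm, ← ENNReal.ofReal_mul (by positivity),
    ENNReal.ofReal_le_ofReal_iff (by positivity), hw] at h3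
  have h4 : fockIntegrand f w * K ≤ Real.exp (R ^ 2) * ∫ u in Metric.ball w R, fockIntegrand f u := by
    have e : Real.exp (-‖w‖ ^ 2) * Real.exp (‖w‖ ^ 2) = 1 := by
      rw [← Real.exp_add]; simp
    calc fockIntegrand f w * K = Real.exp (-‖w‖ ^ 2) * (K * ‖f w‖ ^ 2) := by
          unfold fockIntegrand; ring
      _ ≤ Real.exp (-‖w‖ ^ 2) * (Real.exp (‖w‖ ^ 2) * Real.exp (R ^ 2) *
            ∫ u in Metric.ball w R, fockIntegrand f u) := by gcongr
      _ = (Real.exp (-‖w‖ ^ 2) * Real.exp (‖w‖ ^ 2)) * (Real.exp (R ^ 2) *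
            ∫ u in Metric.ball w R, fockIntegrand f u) := by ring
      _ = _ := by rw [e, one_mul]
  rw [mul_right_comm, ← div_eq_mul_inv, le_div_iff₀ hKpos]
  exact h4

lemma fock_deriv_bound (k : ℕ) (r : ℝ) (hr : 0 < r) : ∃ C : ℝ, 0 < C ∧ ∀ f : ℂ → ℂ, MemFock f →
    ∀ z : ℂ, ‖iteratedDeriv k f z‖ ^ 2 * Real.exp (-‖z‖ ^ 2) ≤
      C * (1 + ‖z‖ ^ 2) ^ k * ∫ u in Metric.ball z r, fockIntegrand f u := by
  obtain ⟨C, hC, hsub⟩ := fock_submean (r / 2) (by positivity)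
  set ρ := r / 2 with hρ
  have hρ0 : 0 < ρ := by positivity
  refine ⟨(k.factorial : ℝ) ^ 2 * (C * Real.exp (2 * ρ + ρ ^ 2)) / (ρ ^ k) ^ 2 * 2 ^ k,
    by positivity, ?_⟩
  intro f hf z
  have hnn : ∀ u, 0 ≤ fockIntegrand f u := fun u => by unfold fockIntegrand; positivity
  set I := ∫ u in Metric.ball z r, fockIntegrand f u with hI
  have hI0 : 0 ≤ I := integral_nonneg hnn
  set s := ρ / (1 + ‖z‖) with hs
  have hz1 : 0 < 1 + ‖z‖ := by positivity
  have hs0 : 0 < s := by positivity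
  have hsz : s * (1 + ‖z‖) = ρ := by rw [hs]; field_simp
  have hsρ : s ≤ ρ := by nlinarith [norm_nonneg z]
  have hszρ : s * ‖z‖ ≤ ρ := by nlinarith
  set B := C * Real.exp (2 * ρ + ρ ^ 2) * Real.exp (‖z‖ ^ 2) * I with hB
  have hB0 : 0 ≤ B := by positivity
  have hbd : ∀ w ∈ Metric.sphere z s, ‖f w‖ ≤ √B := by
    intro w hw
    have hw' : ‖w - z‖ = s := by simpa [dist_eq_norm] using hw
    apply Real.le_sqrt_of_sq_le
    have h1 : fockIntegrand f w ≤ C * I := by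
      refine (hsub f hf w).trans ?_
      gcongr
      refine setIntegral_mono_set hf.2.integrableOn (Eventually.of_forall hnn) ?_
      refine (Metric.ball_subset_ball' ?_).eventuallyLE
      rw [dist_eq_norm, hw']
      linarith
    have h2 : ‖w‖ ^ 2 ≤ 2 * ρ + ρ ^ 2 + ‖z‖ ^ 2 := by
      have : ‖w‖ ≤ s + ‖z‖ := by
        rw [← hw']; simpa using norm_add_le (w - z) z
      nlinarith [norm_nonneg w, norm_nonneg z]
    have e : ‖f w‖ ^ 2 = fockIntegrand f w * Real.exp (‖w‖ ^ 2) := by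
      unfold fockIntegrand
      rw [mul_assoc, ← Real.exp_add]; simp
    rw [e]
    calc fockIntegrand f w * Real.exp (‖w‖ ^ 2)
        ≤ C * I * Real.exp (2 * ρ + ρ ^ 2 + ‖z‖ ^ 2) := by
          have := hnn w
          gcongr
      _ = B := by rw [Real.exp_add _ (‖z‖ ^ 2), hB]; ring
  have hcau := Complex.norm_iteratedDeriv_le_of_forall_mem_sphere_norm_le k hs0
    (hf.1.diffContOnCl) hbd
  have hsk : (s ^ k) ^ 2 * (2 ^ k * (1 + ‖z‖ ^ 2) ^ k) ≥ (ρ ^ k) ^ 2 := by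
    rw [← hsz, mul_pow, mul_pow, ← mul_pow 2]
    gcongr
    rw [← pow_mul, mul_comm k 2, pow_mul]
    gcongr
    nlinarith [sq_nonneg (1 - ‖z‖)]
  have hez : Real.exp (‖z‖ ^ 2) * Real.exp (-‖z‖ ^ 2) = 1 := by
    rw [← Real.exp_add]; simp
  calc ‖iteratedDeriv k f z‖ ^ 2 * Real.exp (-‖z‖ ^ 2)
      ≤ (k.factorial * √B / s ^ k) ^ 2 * Real.exp (-‖z‖ ^ 2) := by gcongr
    _ = (k.factorial : ℝ) ^ 2 * (C * Real.exp (2 * ρ + ρ ^ 2) * I) *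
          (Real.exp (‖z‖ ^ 2) * Real.exp (-‖z‖ ^ 2)) * (1 / (s ^ k) ^ 2) := by
        rw [div_pow, mul_pow, Real.sq_sqrt hB0, hB]; ring
    _ = (k.factorial : ℝ) ^ 2 * (C * Real.exp (2 * ρ + ρ ^ 2) * I) * (1 / (s ^ k) ^ 2) := by
        rw [hez, mul_one]
    _ ≤ (k.factorial : ℝ) ^ 2 * (C * Real.exp (2 * ρ + ρ ^ 2) * I) *
          ((2 ^ k * (1 + ‖z‖ ^ 2) ^ k) / (ρ ^ k) ^ 2) := by
        gcongr ?_ * ?_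
        rw [div_le_div_iff₀ (by positivity) (by positivity)]
        linarith
    _ = _ := by ring

/-- Sufficiency in the characterization of k-Fock-Carleson measures:
if sup_z μ(B(z,r))(1+|z|²)^k < ∞ for some r > 0 then
∫ |f^{(k)}|² e^{-|z|²} dμ ≤ ϖ ‖f‖²_{F²} for all f ∈ F². -/
theorem kFC_measure_sufficient (μ : Measure ℂ) (k : ℕ) (r : ℝ) (hr : 0 < r)
    (M : ℝ)
    (hM : ∀ z : ℂ, μ (Metric.ball z r) * ENNReal.ofReal ((1 + ‖z‖ ^ 2) ^ k) ≤
      ENNReal.ofReal M) :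
    ∃ ϖ : ℝ, ∀ f : ℂ → ℂ, MemFock f →
      ∫⁻ z, ENNReal.ofReal (‖iteratedDeriv k f z‖ ^ 2 * Real.exp (-‖z‖ ^ 2)) ∂μ ≤
        ENNReal.ofReal (ϖ * fockNormSq f) := by
  obtain ⟨C, hC, hder⟩ := fock_deriv_bound k r hr
  have hfin : IsLocallyFiniteMeasure μ := by
    refine ⟨fun z => ⟨Metric.ball z r, Metric.ball_mem_nhds z hr, ?_⟩⟩
    have h1 : (1 : ENNReal) ≤ ENNReal.ofReal ((1 + ‖z‖ ^ 2) ^ k) := by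
      rw [ENNReal.one_le_ofReal]
      exact one_le_pow₀ (by nlinarith [sq_nonneg ‖z‖])
    calc μ (Metric.ball z r) ≤ μ (Metric.ball z r) * ENNReal.ofReal ((1 + ‖z‖ ^ 2) ^ k) :=
          le_mul_of_one_le_right' h1
      _ ≤ ENNReal.ofReal M := hM z
      _ < ⊤ := ENNReal.ofReal_lt_top
  set D : ℝ := C * (2 * (1 + r ^ 2)) ^ k with hD
  have hD0 : 0 < D := by positivity
  refine ⟨D * max M 0 * π, ?_⟩
  intro f hf
  have hnn : ∀ u, 0 ≤ fockIntegrand f u := fun u => by unfold fockIntegrand; positivity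
  let A : ℂ → ENNReal := fun u => ENNReal.ofReal (fockIntegrand f u)
  have hAm : Measurable A := by
    have : Continuous (fockIntegrand f) := by
      have := hf.1.continuous
      unfold fockIntegrand
      fun_prop
    exact this.measurable.ennreal_ofReal
  let S : Set (ℂ × ℂ) := {p | dist p.2 p.1 < r}
  have hS : MeasurableSet S :=
    (isOpen_lt (by fun_prop) (by fun_prop)).measurableSet
  let G : ℂ × ℂ → ENNReal :=
    S.indicator fun p => ENNReal.ofReal (C * (1 + ‖p.1‖ ^ 2) ^ k) * A p.2
  have hG : Measurable G := by
    refine Measurable.indicator ?_ hS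
    refine Measurable.mul ?_ (hAm.comp measurable_snd)
    apply Measurable.ennreal_ofReal
    fun_prop
  calc ∫⁻ z, ENNReal.ofReal (‖iteratedDeriv k f z‖ ^ 2 * Real.exp (-‖z‖ ^ 2)) ∂μ
      ≤ ∫⁻ z, ∫⁻ u, G (z, u) ∂volume ∂μ := by
        refine lintegral_mono fun z => ?_
        have e : ∫⁻ u, G (z, u) = ENNReal.ofReal (C * (1 + ‖z‖ ^ 2) ^ k) *
            ∫⁻ u in Metric.ball z r, A u := by
          rw [← lintegral_const_mul' _ _ ENNReal.ofReal_ne_top,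
            ← lintegral_indicator Metric.isOpen_ball.measurableSet]
          rfl
        rw [e, ← ofReal_integral_eq_lintegral_ofReal hf.2.integrableOn
          (Eventually.of_forall hnn), ← ENNReal.ofReal_mul (by positivity)]
        exact ENNReal.ofReal_le_ofReal (hder f hf z)
    _ = ∫⁻ u, ∫⁻ z, G (z, u) ∂μ ∂volume :=
        lintegral_lintegral_swap (f := fun z u => G (z, u)) hG.aemeasurable
    _ ≤ ∫⁻ u, ENNReal.ofReal (D * max M 0) * A u := by
        refine lintegral_mono fun u => ?_
        have hle : ∀ z, G (z, u) ≤ (Metric.ball u r).indicator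
            (fun _ => ENNReal.ofReal (D * (1 + ‖u‖ ^ 2) ^ k) * A u) z := by
          intro z
          by_cases hz : z ∈ Metric.ball u r
          · have hz' : (z, u) ∈ S := by
              simpa [S, dist_comm] using hz
            rw [Set.indicator_of_mem hz]
            simp only [G]
            rw [Set.indicator_of_mem hz']
            simp only
            gcongr ENNReal.ofReal ?_ * _
            rw [hD, mul_assoc, ← mul_pow]
            gcongr
            have h1 : ‖z - u‖ < r := by simpa [dist_eq_norm] using hz
            have h2 : ‖z‖ ≤ r + ‖u‖ := by
              have := norm_add_le (z - u) u
              simp only [sub_add_cancel] at this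
              linarith
            nlinarith [norm_nonneg z, norm_nonneg u, sq_nonneg (r - ‖u‖),
              mul_nonneg (sq_nonneg r) (sq_nonneg ‖u‖)]
          · have hz' : (z, u) ∉ S := by
              simpa [S, dist_comm] using hz
            simp only [G]
            rw [Set.indicator_of_notMem hz']
            exact zero_le
        refine (lintegral_mono hle).trans ?_
        rw [lintegral_indicator_const Metric.isOpen_ball.measurableSet, mul_right_comm]
        refine mul_le_mul_left ?_ _
        rw [ENNReal.ofReal_mul hD0.le, ENNReal.ofReal_mul hD0.le, mul_assoc]
        refine mul_le_mul_right ?_ _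
        rw [mul_comm]
        exact (hM u).trans (ENNReal.ofReal_le_ofReal (le_max_left _ _))
    _ = ENNReal.ofReal (D * max M 0 * π * fockNormSq f) := by
        rw [lintegral_const_mul' _ _ ENNReal.ofReal_ne_top,
          ← ofReal_integral_eq_lintegral_ofReal hf.2 (Eventually.of_forall hnn),
          ← ENNReal.ofReal_mul (by positivity)]
        congr 1
        unfold fockNormSq
        have := Real.pi_ne_zero
        field_simp
end
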